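/- A 4-form σ on ℝ^8 satisfies Ω_Φ(σ) = 0 if and only if σ is anti-self-dual, i.e., σ_{ijkl} = −(1/24) ε_{ijklabcd} σ_{abcd} for all i,j,k,l; moreover this eigenspace has dimension 35. -/

import Mathlib

/-!
We work in ℝ⁸ with the standard basis `e₀, …, e₇`.  A `k`-form is a totally antisymmetric
map `(Fin 8)^k → ℝ`; repeated indices are summed over `Fin 8` and `kd` is the Kronecker
delta.  `Phi` is the fundamental 4-form of the standard `Spin(7)`-structure on ℝ⁸,
`Φ = -e₀₁₂₇ + e₀₂₃₆ - e₀₃₄₇ - e₀₅₆₇ + e₀₁₄₆ + e₀₂₄₅ - e₀₁₃₅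
     - e₃₄₅₆ - e₁₄₅₇ - e₁₂₅₆ - e₁₂₃₄ - e₂₃₅₇ - e₁₃₆₇ + e₂₄₆₇`.
-/

noncomputable section

/-- Kronecker delta on `Fin 8`. -/
def kd (a b : Fin 8) : ℝ := if a = b then 1 else 0

/-- Component at the indices `(i,j,k,l)` of the wedge product `e_a ∧ e_b ∧ e_c ∧ e_d`
of standard coordinate 1-forms, normalized so that `(e_a ∧ e_b ∧ e_c ∧ e_d)_{abcd} = 1`;
it is the alternating sum of products of Kronecker deltas. -/
def wedge4 (a b c d i j k l : Fin 8) : ℝ :=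
  Matrix.det !![kd a i, kd a j, kd a k, kd a l;
                kd b i, kd b j, kd b k, kd b l;
                kd c i, kd c j, kd c k, kd c l;
                kd d i, kd d j, kd d k, kd d l]

/-- The fundamental 4-form `Φ` of the standard `Spin(7)`-structure on `ℝ⁸`, in components:
the totally antisymmetric 4-tensor with `Φ_{0127} = -1`, `Φ_{0236} = 1`, `Φ_{0347} = -1`,
`Φ_{0567} = -1`, `Φ_{0146} = 1`, `Φ_{0245} = 1`, `Φ_{0135} = -1`, `Φ_{3456} = -1`,
`Φ_{1457} = -1`, `Φ_{1256} = -1`, `Φ_{1234} = -1`, `Φ_{2357} = -1`, `Φ_{1367} = -1`,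
`Φ_{2467} = 1`, all components not obtained from these by permutation being zero. -/
def Phi (i j k l : Fin 8) : ℝ :=
    -wedge4 0 1 2 7 i j k l + wedge4 0 2 3 6 i j k l - wedge4 0 3 4 7 i j k l
  - wedge4 0 5 6 7 i j k l + wedge4 0 1 4 6 i j k l + wedge4 0 2 4 5 i j k l
  - wedge4 0 1 3 5 i j k l - wedge4 3 4 5 6 i j k l - wedge4 1 4 5 7 i j k l
  - wedge4 1 2 5 6 i j k l - wedge4 1 2 3 4 i j k l - wedge4 2 3 5 7 i j k l
  - wedge4 1 3 6 7 i j k l + wedge4 2 4 6 7 i j k l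

/-- The Levi-Civita symbol on eight indices: `eps8 f` is the sign of
`(f 0, …, f 7)` as a permutation of `(0, …, 7)`, and `0` if an index repeats. -/
def eps8 (f : Fin 8 → Fin 8) : ℝ :=
  if h : Function.Bijective f then ((Equiv.Perm.sign (Equiv.ofBijective f h) : ℤ) : ℝ) else 0

/-- Totally antisymmetric 4-tensors on ℝ⁸ (4-forms). -/
def FourForm : Submodule ℝ (Fin 8 → Fin 8 → Fin 8 → Fin 8 → ℝ) where
  carrier :=
    {σ | ∀ i j k l, σ i j k l = -σ j i k l ∧ σ i j k l = -σ i k j l ∧ σ i j k l = -σ i j l k}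
  zero_mem' := by intro i j k l; refine ⟨by simp, by simp, by simp⟩
  add_mem' := by
    intro a b ha hb i j k l
    refine ⟨?_, ?_, ?_⟩
    · simp only [Pi.add_apply, (ha i j k l).1, (hb i j k l).1]; ring
    · simp only [Pi.add_apply, (ha i j k l).2.1, (hb i j k l).2.1]; ring
    · simp only [Pi.add_apply, (ha i j k l).2.2, (hb i j k l).2.2]; ring
  smul_mem' := by
    intro c a ha i j k l
    refine ⟨?_, ?_, ?_⟩
    · simp only [Pi.smul_apply, smul_eq_mul, (ha i j k l).1]; ring
    · simp only [Pi.smul_apply, smul_eq_mul, (ha i j k l).2.1]; ring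
    · simp only [Pi.smul_apply, smul_eq_mul, (ha i j k l).2.2]; ring

/-- The operator `Ω_Φ` on 4-tensors:
`(Ω_Φ(σ))_{ijkl} = σ_{ijpq}Φ_{pqkl} + σ_{ikpq}Φ_{pqlj} + σ_{ilpq}Φ_{pqjk}
                 + σ_{jkpq}Φ_{pqil} + σ_{jlpq}Φ_{pqki} + σ_{klpq}Φ_{pqij}`. -/
def OmegaOp : (Fin 8 → Fin 8 → Fin 8 → Fin 8 → ℝ) →ₗ[ℝ] (Fin 8 → Fin 8 → Fin 8 → Fin 8 → ℝ) where
  toFun σ := fun i j k l =>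
    (∑ p, ∑ q, σ i j p q * Phi p q k l) + (∑ p, ∑ q, σ i k p q * Phi p q l j)
    + (∑ p, ∑ q, σ i l p q * Phi p q j k) + (∑ p, ∑ q, σ j k p q * Phi p q i l)
    + (∑ p, ∑ q, σ j l p q * Phi p q k i) + (∑ p, ∑ q, σ k l p q * Phi p q i j)
  map_add' σ τ := by
    funext i j k l
    simp only [Pi.add_apply, add_mul, Finset.sum_add_distrib]
    ring
  map_smul' c σ := by
    funext i j k l
    simp only [Pi.smul_apply, smul_eq_mul, RingHom.id_apply, Finset.mul_sum, mul_assoc, mul_add]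

/-- Sign of the comparison of two indices. -/
def sg (a b : Fin 8) : ℤ := if a < b then 1 else if a = b then 0 else -1

/-- Integer-valued Levi-Civita symbol as a product over pairs. -/
def epsZ (a b c d e f g h : Fin 8) : ℤ :=
  sg a b * sg a c * sg a d * sg a e * sg a f * sg a g * sg a h *
  (sg b c * sg b d * sg b e * sg b f * sg b g * sg b h) *
  (sg c d * sg c e * sg c f * sg c g * sg c h) *
  (sg d e * sg d f * sg d g * sg d h) * (sg e f * sg e g * sg e h) * (sg f g * sg f h) * sg g h

theorem sg_swap (a b : Fin 8) : sg a b = - sg b a := by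
  revert a b; decide

theorem eps8_prod (f : Fin 8 → Fin 8) :
    eps8 f = ((∏ i, ∏ j ∈ Finset.Ioi i, sg (f i) (f j) : ℤ) : ℝ) := by
  unfold eps8
  split_ifs with h
  · congr 1
    rw [Equiv.Perm.sign_eq_prod_prod_Ioi]
    push_cast
    refine Finset.prod_congr rfl fun i _ => Finset.prod_congr rfl fun j hj => ?_
    have hij : i < j := by simpa using hj
    have hne : f i ≠ f j := fun e => hij.ne (h.1 e)
    simp only [Equiv.ofBijective_apply, sg, hne, if_false]
    split_ifs <;> simp
  · have h' : ¬ Function.Injective f := fun e => h (Finite.injective_iff_bijective.1 e)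
    simp only [Function.Injective, not_forall] at h'
    obtain ⟨i, j, e, hne⟩ := h'
    have key : ∀ i j, i < j → f i = f j →
        (∏ i, ∏ j ∈ Finset.Ioi i, sg (f i) (f j) : ℤ) = 0 := by
      intro i j hij e
      refine Finset.prod_eq_zero (Finset.mem_univ i) ?_
      refine Finset.prod_eq_zero (i := j) (by simpa using hij) ?_
      simp [sg, e]
    rcases lt_or_gt_of_ne hne with hl | hl
    · rw [key i j hl e]; simp
    · rw [key j i hl e.symm]; simp

theorem eps8_eq (a b c d e f g h : Fin 8) :
    eps8 ![a, b, c, d, e, f, g, h] = ((epsZ a b c d e f g h : ℤ) : ℝ) := by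
  rw [eps8_prod]
  congr 1
  have h0 : Finset.Ioi (0 : Fin 8) = {1, 2, 3, 4, 5, 6, 7} := by decide
  have h1 : Finset.Ioi (1 : Fin 8) = {2, 3, 4, 5, 6, 7} := by decide
  have h2 : Finset.Ioi (2 : Fin 8) = {3, 4, 5, 6, 7} := by decide
  have h3 : Finset.Ioi (3 : Fin 8) = {4, 5, 6, 7} := by decide
  have h4 : Finset.Ioi (4 : Fin 8) = {5, 6, 7} := by decide
  have h5 : Finset.Ioi (5 : Fin 8) = {6, 7} := by decide
  have h6 : Finset.Ioi (6 : Fin 8) = {7} := by decide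
  have h7 : Finset.Ioi (7 : Fin 8) = ∅ := by decide
  rw [Fin.prod_univ_eight, h0, h1, h2, h3, h4, h5, h6, h7]
  simp [-mul_eq_mul_right_iff, -mul_eq_mul_left_iff, epsZ]
  ring

/-- Integer Kronecker delta. -/
def kz (a b : Fin 8) : ℤ := if a = b then 1 else 0

theorem kd_eq (a b : Fin 8) : kd a b = ((kz a b : ℤ) : ℝ) := by
  unfold kd kz; split_ifs <;> simp

/-- The alternating sum of products of deltas, expanded along the first row. -/
def wz (a b c d i j k l : Fin 8) : ℤ :=
  let m (x y z : Fin 8) : ℤ :=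
    kz b x * (kz c y * kz d z - kz c z * kz d y)
    - kz b y * (kz c x * kz d z - kz c z * kz d x)
    + kz b z * (kz c x * kz d y - kz c y * kz d x)
  kz a i * m j k l - kz a j * m i k l + kz a k * m i j l - kz a l * m i j k

theorem wedge4_eq (a b c d i j k l : Fin 8) :
    wedge4 a b c d i j k l = ((wz a b c d i j k l : ℤ) : ℝ) := by
  simp only [wedge4, wz, kd_eq]
  simp [Matrix.det_succ_row_zero, Fin.sum_univ_succ, Fin.succAbove]
  ring

theorem mem_ff {σ : Fin 8 → Fin 8 → Fin 8 → Fin 8 → ℝ} : σ ∈ FourForm ↔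
    ∀ i j k l, σ i j k l = -σ j i k l ∧ σ i j k l = -σ i k j l ∧ σ i j k l = -σ i j l k :=
  Iff.rfl

theorem wedge4_mem (a b c d : Fin 8) : wedge4 a b c d ∈ FourForm := by
  rw [mem_ff]; intro i j k l
  simp only [wedge4_eq]
  refine ⟨?_, ?_, ?_⟩ <;> (simp only [wz]; push_cast; ring)

theorem eps_mem (i j k l : Fin 8) :
    (fun a b c d => ((epsZ i j k l a b c d : ℤ) : ℝ)) ∈ FourForm := by
  rw [mem_ff]; intro a b c d
  refine ⟨?_, ?_, ?_⟩
  · simp only [epsZ, sg_swap b a]; push_cast; ring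
  · simp only [epsZ, sg_swap c b]; push_cast; ring
  · simp only [epsZ, sg_swap d c]; push_cast; ring

theorem eps_mem' (a b c d : Fin 8) :
    (fun i j k l => ((epsZ i j k l a b c d : ℤ) : ℝ)) ∈ FourForm := by
  rw [mem_ff]; intro i j k l
  refine ⟨?_, ?_, ?_⟩
  · simp only [epsZ, sg_swap j i]; push_cast; ring
  · simp only [epsZ, sg_swap k j]; push_cast; ring
  · simp only [epsZ, sg_swap l k]; push_cast; ring

theorem Phi_mem : Phi ∈ FourForm := by
  rw [mem_ff]; intro i j k l
  have h := fun a b c d => mem_ff.1 (wedge4_mem a b c d) i j k l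
  refine ⟨?_, ?_, ?_⟩ <;> unfold Phi
  · simp only [fun a b c d => (h a b c d).1]; ring
  · simp only [fun a b c d => (h a b c d).2.1]; ring
  · simp only [fun a b c d => (h a b c d).2.2]; ring

section forms
variable {σ : Fin 8 → Fin 8 → Fin 8 → Fin 8 → ℝ}

theorem s12 (h : σ ∈ FourForm) (i j k l : Fin 8) (_ : j < i) : σ i j k l = -σ j i k l :=
  (mem_ff.1 h i j k l).1
theorem s23 (h : σ ∈ FourForm) (i j k l : Fin 8) (_ : k < j) : σ i j k l = -σ i k j l :=
  (mem_ff.1 h i j k l).2.1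
theorem s34 (h : σ ∈ FourForm) (i j k l : Fin 8) (_ : l < k) : σ i j k l = -σ i j l k :=
  (mem_ff.1 h i j k l).2.2
theorem z12 (h : σ ∈ FourForm) (i k l : Fin 8) : σ i i k l = 0 := by
  have := (mem_ff.1 h i i k l).1; linarith
theorem z23 (h : σ ∈ FourForm) (i k l : Fin 8) : σ i k k l = 0 := by
  have := (mem_ff.1 h i k k l).2.1; linarith
theorem z34 (h : σ ∈ FourForm) (i k l : Fin 8) : σ i k l l = 0 := by
  have := (mem_ff.1 h i k l l).2.2; linarith

theorem zero_of_sorted (h : σ ∈ FourForm)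
    (h0 : ∀ i j k l, i < j → j < k → k < l → σ i j k l = 0) (i j k l : Fin 8) :
    σ i j k l = 0 := by
  have H1 : ∀ i j k l, i < j → j < k → σ i j k l = 0 := by
    intro i j k l hij hjk
    rcases lt_trichotomy k l with hl | rfl | hl
    · exact h0 _ _ _ _ hij hjk hl
    · exact z34 h _ _ _
    rw [s34 h _ _ _ _ hl, neg_eq_zero]
    rcases lt_trichotomy j l with hl | rfl | hl
    · exact h0 _ _ _ _ hij hl ‹_›
    · exact z23 h _ _ _
    rw [s23 h _ _ _ _ hl, neg_eq_zero]
    rcases lt_trichotomy i l with hl | rfl | hl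
    · exact h0 _ _ _ _ hl ‹_› ‹_›
    · exact z12 h _ _ _
    rw [s12 h _ _ _ _ hl, neg_eq_zero]
    exact h0 _ _ _ _ hl ‹_› ‹_›
  have H2 : ∀ i j k l, i < j → σ i j k l = 0 := by
    intro i j k l hij
    rcases lt_trichotomy j k with hl | rfl | hl
    · exact H1 _ _ _ _ hij hl
    · exact z23 h _ _ _
    rw [s23 h _ _ _ _ hl, neg_eq_zero]
    rcases lt_trichotomy i k with hl | rfl | hl
    · exact H1 _ _ _ _ hl ‹_›
    · exact z12 h _ _ _
    rw [s12 h _ _ _ _ hl, neg_eq_zero]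
    exact H1 _ _ _ _ hl ‹_›
  rcases lt_trichotomy i j with hl | rfl | hl
  · exact H2 _ _ _ _ hl
  · exact z12 h _ _ _
  rw [s12 h _ _ _ _ hl, neg_eq_zero]
  exact H2 _ _ _ _ hl

theorem ext_of_sorted {τ : Fin 8 → Fin 8 → Fin 8 → Fin 8 → ℝ} (h : σ ∈ FourForm)
    (h' : τ ∈ FourForm)
    (h0 : ∀ i j k l, i < j → j < k → k < l → σ i j k l = τ i j k l) (i j k l : Fin 8) :
    σ i j k l = τ i j k l := by
  have := zero_of_sorted (FourForm.sub_mem h h')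
    (fun i j k l a b c => by simp [h0 i j k l a b c]) i j k l
  simpa [sub_eq_zero] using this


end forms
/-- Contraction of a 4-form with a decomposable one. -/
theorem contr_wedge {σ : Fin 8 → Fin 8 → Fin 8 → Fin 8 → ℝ} (h : σ ∈ FourForm)
    (i j k l : Fin 8) :
    ∑ a, ∑ b, ∑ c, ∑ d, wedge4 i j k l a b c d * σ a b c d = 24 * σ i j k l := by
  have e1 := fun x y z w => (mem_ff.1 h x y z w).1
  have e2 := fun x y z w => (mem_ff.1 h x y z w).2.1
  have e3 := fun x y z w => (mem_ff.1 h x y z w).2.2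
  simp only [wedge4_eq, wz, kz]
  push_cast
  simp only [mul_add, mul_sub, add_mul, sub_mul, Finset.sum_add_distrib, Finset.sum_sub_distrib, ite_mul, mul_ite, zero_mul,
    one_mul, mul_one, mul_zero, Finset.sum_ite_irrel, Finset.sum_const_zero, Finset.sum_ite_eq, Finset.mem_univ, if_true]
  linarith only [e3 i j l k, e2 i k j l, e3 i k l j, e2 i l j k, e2 i l k j, e1 j i k l,
    e1 j i l k, e2 j k i l, e3 j k l i, e2 j l i k, e2 j l k i, e1 k i j l,
    e1 k i l j, e1 k j i l, e1 k j l i, e2 k l i j, e2 k l j i, e1 l i j k,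
    e1 l i k j, e1 l j i k, e1 l j k i, e1 l k i j, e1 l k j i]

/-- The pairs of complementary sorted quadruples, with the sign of the concatenation. -/
def prs : Fin 35 → (Fin 8 × Fin 8 × Fin 8 × Fin 8) × (Fin 8 × Fin 8 × Fin 8 × Fin 8) × ℤ := ![
  ((0, 1, 2, 3), (4, 5, 6, 7), 1),
  ((0, 1, 2, 4), (3, 5, 6, 7), -1),
  ((0, 1, 2, 5), (3, 4, 6, 7), 1),
  ((0, 1, 2, 6), (3, 4, 5, 7), -1),
  ((0, 1, 2, 7), (3, 4, 5, 6), 1),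
  ((0, 1, 3, 4), (2, 5, 6, 7), 1),
  ((0, 1, 3, 5), (2, 4, 6, 7), -1),
  ((0, 1, 3, 6), (2, 4, 5, 7), 1),
  ((0, 1, 3, 7), (2, 4, 5, 6), -1),
  ((0, 1, 4, 5), (2, 3, 6, 7), 1),
  ((0, 1, 4, 6), (2, 3, 5, 7), -1),
  ((0, 1, 4, 7), (2, 3, 5, 6), 1),
  ((0, 1, 5, 6), (2, 3, 4, 7), 1),
  ((0, 1, 5, 7), (2, 3, 4, 6), -1),
  ((0, 1, 6, 7), (2, 3, 4, 5), 1),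
  ((0, 2, 3, 4), (1, 5, 6, 7), -1),
  ((0, 2, 3, 5), (1, 4, 6, 7), 1),
  ((0, 2, 3, 6), (1, 4, 5, 7), -1),
  ((0, 2, 3, 7), (1, 4, 5, 6), 1),
  ((0, 2, 4, 5), (1, 3, 6, 7), -1),
  ((0, 2, 4, 6), (1, 3, 5, 7), 1),
  ((0, 2, 4, 7), (1, 3, 5, 6), -1),
  ((0, 2, 5, 6), (1, 3, 4, 7), -1),
  ((0, 2, 5, 7), (1, 3, 4, 6), 1),
  ((0, 2, 6, 7), (1, 3, 4, 5), -1),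
  ((0, 3, 4, 5), (1, 2, 6, 7), 1),
  ((0, 3, 4, 6), (1, 2, 5, 7), -1),
  ((0, 3, 4, 7), (1, 2, 5, 6), 1),
  ((0, 3, 5, 6), (1, 2, 4, 7), 1),
  ((0, 3, 5, 7), (1, 2, 4, 6), -1),
  ((0, 3, 6, 7), (1, 2, 4, 5), 1),
  ((0, 4, 5, 6), (1, 2, 3, 7), -1),
  ((0, 4, 5, 7), (1, 2, 3, 6), 1),
  ((0, 4, 6, 7), (1, 2, 3, 5), -1),
  ((0, 5, 6, 7), (1, 2, 3, 4), 1)]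

/-- Filler for the unused entries of the table below. -/
def no : (Fin 8 × Fin 8 × ℤ) × (Fin 8 × Fin 8 × ℤ) × (Fin 8 × Fin 8 × ℤ) :=
  ((0, 0, 0), (0, 0, 0), (0, 0, 0))

/-- For k < l, the three pairs p < q with nonzero component of the fundamental form. -/
def tab : Fin 8 → Fin 8 → (Fin 8 × Fin 8 × ℤ) × (Fin 8 × Fin 8 × ℤ) × (Fin 8 × Fin 8 × ℤ) := ![
  ![no,
    ((2, 7, -1), (3, 5, -1), (4, 6, 1)),
    ((1, 7, 1), (3, 6, 1), (4, 5, 1)),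
    ((1, 5, 1), (2, 6, -1), (4, 7, -1)),
    ((1, 6, -1), (2, 5, -1), (3, 7, 1)),
    ((1, 3, -1), (2, 4, 1), (6, 7, -1)),
    ((1, 4, 1), (2, 3, 1), (5, 7, 1)),
    ((1, 2, -1), (3, 4, -1), (5, 6, -1))],
  ![no,
    no,
    ((0, 7, -1), (3, 4, -1), (5, 6, -1)),
    ((0, 5, -1), (2, 4, 1), (6, 7, -1)),
    ((0, 6, 1), (2, 3, -1), (5, 7, -1)),
    ((0, 3, 1), (2, 6, 1), (4, 7, 1)),
    ((0, 4, -1), (2, 5, -1), (3, 7, 1)),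
    ((0, 2, 1), (3, 6, -1), (4, 5, -1))],
  ![no,
    no,
    no,
    ((0, 6, 1), (1, 4, -1), (5, 7, -1)),
    ((0, 5, 1), (1, 3, 1), (6, 7, 1)),
    ((0, 4, -1), (1, 6, -1), (3, 7, 1)),
    ((0, 3, -1), (1, 5, 1), (4, 7, -1)),
    ((0, 1, -1), (3, 5, -1), (4, 6, 1))],
  ![no,
    no,
    no,
    no,
    ((0, 7, -1), (1, 2, -1), (5, 6, -1)),
    ((0, 1, -1), (2, 7, -1), (4, 6, 1)),
    ((0, 2, 1), (1, 7, -1), (4, 5, -1)),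
    ((0, 4, 1), (1, 6, 1), (2, 5, 1))],
  ![no,
    no,
    no,
    no,
    no,
    ((0, 2, 1), (1, 7, -1), (3, 6, -1)),
    ((0, 1, 1), (2, 7, 1), (3, 5, 1)),
    ((0, 3, -1), (1, 5, 1), (2, 6, -1))],
  ![no,
    no,
    no,
    no,
    no,
    no,
    ((0, 7, -1), (1, 2, -1), (3, 4, -1)),
    ((0, 6, 1), (1, 4, -1), (2, 3, -1))],
  ![no,
    no,
    no,
    no,
    no,
    no,
    no,
    ((0, 5, -1), (1, 3, -1), (2, 4, 1))],
  ![no,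
    no,
    no,
    no,
    no,
    no,
    no,
    no]]

/-- Short-circuiting version of `wz`, for fast evaluation. -/
def wf (a b c d i j k l : Fin 8) : ℤ :=
  let n (x y : Fin 8) : ℤ :=
    (if c = x then (if d = y then 1 else 0) else 0) - (if c = y then (if d = x then 1 else 0) else 0)
  let m (x y z : Fin 8) : ℤ :=
    (if b = x then n y z else 0) - (if b = y then n x z else 0) + (if b = z then n x y else 0)
  (if a = i then m j k l else 0) - (if a = j then m i k l else 0)
    + (if a = k then m i j l else 0) - (if a = l then m i j k else 0)

theorem wz_eq_wf (a b c d i j k l : Fin 8) : wz a b c d i j k l = wf a b c d i j k l := by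
  simp only [wz, wf, kz, ite_mul, one_mul, zero_mul]

/-- Integer-valued version of the fundamental form. -/
def PhiZ (i j k l : Fin 8) : ℤ :=
    -wz 0 1 2 7 i j k l + wz 0 2 3 6 i j k l - wz 0 3 4 7 i j k l
  - wz 0 5 6 7 i j k l + wz 0 1 4 6 i j k l + wz 0 2 4 5 i j k l
  - wz 0 1 3 5 i j k l - wz 3 4 5 6 i j k l - wz 1 4 5 7 i j k l
  - wz 1 2 5 6 i j k l - wz 1 2 3 4 i j k l - wz 2 3 5 7 i j k l
  - wz 1 3 6 7 i j k l + wz 2 4 6 7 i j k l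

theorem Phi_eq (i j k l : Fin 8) : Phi i j k l = ((PhiZ i j k l : ℤ) : ℝ) := by
  simp only [Phi, PhiZ, wedge4_eq]; push_cast; rfl

/-- One antisymmetrized pair of deltas with a coefficient. -/
def dz (t : Fin 8 × Fin 8 × ℤ) (p q : Fin 8) : ℤ :=
  t.2.2 * (kz p t.1 * kz q t.2.1 - kz p t.2.1 * kz q t.1)

theorem PhiZ_tab : ∀ k l : Fin 8, k < l → ∀ p q : Fin 8,
    PhiZ p q k l = dz (tab k l).1 p q + dz (tab k l).2.1 p q + dz (tab k l).2.2 p q := by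
  simp only [PhiZ, wz_eq_wf]
  decide +kernel

theorem contr_dz (t : Fin 8 × Fin 8 × ℤ) (f : Fin 8 → Fin 8 → ℝ) (hf : ∀ p q, f p q = -f q p) :
    ∑ p, ∑ q, f p q * ((dz t p q : ℤ) : ℝ) = 2 * ((t.2.2 : ℝ) * f t.1 t.2.1) := by
  simp only [dz, kz]
  push_cast
  simp only [mul_sub, Finset.sum_sub_distrib, mul_ite,
    mul_one, mul_zero, Finset.sum_ite_eq',
    Finset.mem_univ, if_true]
  rw [hf t.2.1 t.1]; ring

/-- The value of the contraction read off from the table. -/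
def tv (t : (Fin 8 × Fin 8 × ℤ) × (Fin 8 × Fin 8 × ℤ) × (Fin 8 × Fin 8 × ℤ))
    (f : Fin 8 → Fin 8 → ℝ) : ℝ :=
  (t.1.2.2 : ℝ) * f t.1.1 t.1.2.1 + (t.2.1.2.2 : ℝ) * f t.2.1.1 t.2.1.2.1 +
    (t.2.2.2.2 : ℝ) * f t.2.2.1 t.2.2.2.1

theorem contr_Phi (f : Fin 8 → Fin 8 → ℝ) (hf : ∀ p q, f p q = -f q p) (k l : Fin 8)
    (hkl : k < l) : ∑ p, ∑ q, f p q * Phi p q k l = 2 * tv (tab k l) f := by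
  simp only [Phi_eq, PhiZ_tab k l hkl, Int.cast_add, mul_add, Finset.sum_add_distrib,
    contr_dz _ f hf, tv]

/-- Evaluation of a 4-tensor at a quadruple. -/
def ev (σ : Fin 8 → Fin 8 → Fin 8 → Fin 8 → ℝ) (t : Fin 8 × Fin 8 × Fin 8 × Fin 8) : ℝ :=
  σ t.1 t.2.1 t.2.2.1 t.2.2.2

theorem prs_cover : ∀ i j : Fin 8, i < j → ∀ k : Fin 8, j < k → ∀ l : Fin 8, k < l →
    ∃ n, (prs n).1 = (i, j, k, l) ∨ (prs n).2.1 = (i, j, k, l) := by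
  decide +kernel

theorem prs_eps : ∀ n : Fin 35, ∀ i j : Fin 8, i < j → ∀ k : Fin 8, j < k → ∀ l : Fin 8, k < l →
    epsZ (prs n).1.1 (prs n).1.2.1 (prs n).1.2.2.1 (prs n).1.2.2.2 i j k l =
      (prs n).2.2 * wz (prs n).2.1.1 (prs n).2.1.2.1 (prs n).2.1.2.2.1 (prs n).2.1.2.2.2 i j k l ∧
    epsZ (prs n).2.1.1 (prs n).2.1.2.1 (prs n).2.1.2.2.1 (prs n).2.1.2.2.2 i j k l =
      (prs n).2.2 * wz (prs n).1.1 (prs n).1.2.1 (prs n).1.2.2.1 (prs n).1.2.2.2 i j k l := by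
  simp only [wz_eq_wf]
  decide +kernel

theorem prs_orth : ∀ n m : Fin 35,
    wz (prs n).1.1 (prs n).1.2.1 (prs n).1.2.2.1 (prs n).1.2.2.2
      (prs m).1.1 (prs m).1.2.1 (prs m).1.2.2.1 (prs m).1.2.2.2 = (if n = m then 1 else 0) ∧
    wz (prs n).2.1.1 (prs n).2.1.2.1 (prs n).2.1.2.2.1 (prs n).2.1.2.2.2
      (prs m).1.1 (prs m).1.2.1 (prs m).1.2.2.1 (prs m).1.2.2.2 = 0 ∧
    wz (prs n).1.1 (prs n).1.2.1 (prs n).1.2.2.1 (prs n).1.2.2.2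
      (prs m).2.1.1 (prs m).2.1.2.1 (prs m).2.1.2.2.1 (prs m).2.1.2.2.2 = 0 ∧
    wz (prs n).2.1.1 (prs n).2.1.2.1 (prs n).2.1.2.2.1 (prs n).2.1.2.2.2
      (prs m).2.1.1 (prs m).2.1.2.1 (prs m).2.1.2.2.1 (prs m).2.1.2.2.2 =
        (if n = m then 1 else 0) := by
  simp only [wz_eq_wf]
  decide +kernel

theorem prs_sq : ∀ n, (prs n).2.2 * (prs n).2.2 = 1 := by decide +kernel

section omega
variable {σ : Fin 8 → Fin 8 → Fin 8 → Fin 8 → ℝ}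

theorem Omega_apply (σ : Fin 8 → Fin 8 → Fin 8 → Fin 8 → ℝ) (i j k l : Fin 8) :
    OmegaOp σ i j k l =
    (∑ p, ∑ q, σ i j p q * Phi p q k l) + (∑ p, ∑ q, σ i k p q * Phi p q l j)
    + (∑ p, ∑ q, σ i l p q * Phi p q j k) + (∑ p, ∑ q, σ j k p q * Phi p q i l)
    + (∑ p, ∑ q, σ j l p q * Phi p q k i) + (∑ p, ∑ q, σ k l p q * Phi p q i j) := rfl

theorem C_swap1 (h : σ ∈ FourForm) (i j k l : Fin 8) :
    ∑ p, ∑ q, σ i j p q * Phi p q k l = -∑ p, ∑ q, σ j i p q * Phi p q k l := by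
  simp only [← Finset.sum_neg_distrib]
  refine Finset.sum_congr rfl fun p _ => Finset.sum_congr rfl fun q _ => ?_
  rw [(mem_ff.1 h i j p q).1]; ring

theorem C_swap2 (σ : Fin 8 → Fin 8 → Fin 8 → Fin 8 → ℝ) (i j k l : Fin 8) :
    ∑ p, ∑ q, σ i j p q * Phi p q k l = -∑ p, ∑ q, σ i j p q * Phi p q l k := by
  simp only [← Finset.sum_neg_distrib]
  refine Finset.sum_congr rfl fun p _ => Finset.sum_congr rfl fun q _ => ?_
  rw [(mem_ff.1 Phi_mem p q k l).2.2]; ring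

theorem Omega_mem (h : σ ∈ FourForm) : OmegaOp σ ∈ FourForm := by
  rw [mem_ff]; intro i j k l
  refine ⟨?_, ?_, ?_⟩
  · rw [Omega_apply, Omega_apply, C_swap1 h j i, C_swap2 σ i l j k, C_swap2 σ j k i l,
      C_swap2 σ i k l j, C_swap2 σ j l k i, C_swap2 σ k l j i]
    ring
  · rw [Omega_apply, Omega_apply, C_swap1 h k j, C_swap2 σ i j k l, C_swap2 σ i k l j,
      C_swap2 σ i l k j, C_swap2 σ k l i j, C_swap2 σ j l k i]
    ring
  · rw [Omega_apply, Omega_apply, C_swap1 h l k, C_swap2 σ i j l k, C_swap2 σ i l k j,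
      C_swap2 σ i k j l, C_swap2 σ j l i k, C_swap2 σ j k l i]
    ring

theorem Omega_sorted (h : σ ∈ FourForm) (i j k l : Fin 8) (hij : i < j) (hjk : j < k)
    (hkl : k < l) : OmegaOp σ i j k l =
      2 * (tv (tab k l) (σ i j) - tv (tab j l) (σ i k) + tv (tab j k) (σ i l)
        + tv (tab i l) (σ j k) - tv (tab i k) (σ j l) + tv (tab i j) (σ k l)) := by
  have a := fun x y p q => (mem_ff.1 h x y p q).2.2
  rw [Omega_apply, C_swap2 σ i k l j, C_swap2 σ j l k i,
    contr_Phi _ (a i j) _ _ hkl, contr_Phi _ (a i k) _ _ (hjk.trans hkl),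
    contr_Phi _ (a i l) _ _ hjk, contr_Phi _ (a j k) _ _ (hij.trans (hjk.trans hkl)),
    contr_Phi _ (a j l) _ _ (hij.trans hjk), contr_Phi _ (a k l) _ _ hij]
  ring

/-- Reduced anti-self-duality conditions. -/
def Asd (σ : Fin 8 → Fin 8 → Fin 8 → Fin 8 → ℝ) : Prop :=
  ∀ n, ev σ (prs n).2.1 = -((prs n).2.2 : ℝ) * ev σ (prs n).1

theorem star_mem (σ : Fin 8 → Fin 8 → Fin 8 → Fin 8 → ℝ) :
    (fun i j k l => -(1/24 : ℝ) *
      ∑ a, ∑ b, ∑ c, ∑ d, eps8 ![i, j, k, l, a, b, c, d] * σ a b c d) ∈ FourForm := by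
  rw [mem_ff]; intro i j k l
  simp only [eps8_eq]
  have h := fun a b c d => mem_ff.1 (eps_mem' a b c d) i j k l
  refine ⟨?_, ?_, ?_⟩
  · simp only [fun a b c d => (h a b c d).1, neg_mul, Finset.sum_neg_distrib]; ring
  · simp only [fun a b c d => (h a b c d).2.1, neg_mul, Finset.sum_neg_distrib]; ring
  · simp only [fun a b c d => (h a b c d).2.2, neg_mul, Finset.sum_neg_distrib]; ring

theorem star_pair (h : σ ∈ FourForm) (I J : Fin 8 × Fin 8 × Fin 8 × Fin 8) (s : ℤ)
    (H : ∀ i j k l : Fin 8, i < j → j < k → k < l →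
      epsZ I.1 I.2.1 I.2.2.1 I.2.2.2 i j k l = s * wz J.1 J.2.1 J.2.2.1 J.2.2.2 i j k l) :
    -(1/24 : ℝ) * ∑ a, ∑ b, ∑ c, ∑ d,
      eps8 ![I.1, I.2.1, I.2.2.1, I.2.2.2, a, b, c, d] * σ a b c d = -(s : ℝ) * ev σ J := by
  have e := ext_of_sorted (eps_mem I.1 I.2.1 I.2.2.1 I.2.2.2)
    (FourForm.smul_mem (s : ℝ) (wedge4_mem J.1 J.2.1 J.2.2.1 J.2.2.2)) (by
      intro i j k l hij hjk hkl
      simp only [Pi.smul_apply, smul_eq_mul, wedge4_eq, H i j k l hij hjk hkl]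
      push_cast; rfl)
  simp only [eps8_eq, e, Pi.smul_apply, smul_eq_mul, mul_assoc, ← Finset.mul_sum,
    contr_wedge h, ev]
  ring

theorem star_iff (h : σ ∈ FourForm) :
    (∀ i j k l, σ i j k l =
      -(1/24) * ∑ a, ∑ b, ∑ c, ∑ d, eps8 ![i, j, k, l, a, b, c, d] * σ a b c d) ↔ Asd σ := by
  have h1 := fun n => star_pair h (prs n).1 (prs n).2.1 (prs n).2.2
    (fun i j k l a b c => (prs_eps n i j a k b l c).1)
  have h2 := fun n => star_pair h (prs n).2.1 (prs n).1 (prs n).2.2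
    (fun i j k l a b c => (prs_eps n i j a k b l c).2)
  constructor
  · intro H n
    rw [← h2 n]
    exact H _ _ _ _
  · intro H
    refine ext_of_sorted h (star_mem σ) ?_
    intro i j k l hij hjk hkl
    obtain ⟨n, hn | hn⟩ := prs_cover i j hij k hjk l hkl
    · have := h1 n
      have sq : ((prs n).2.2 : ℝ) * ((prs n).2.2 : ℝ) = 1 := by exact_mod_cast prs_sq n
      rw [H n, hn] at this
      simp only [ev] at this ⊢
      rw [this]; linear_combination (-σ i j k l) * sq
    · have := h2 n
      rw [← H n, hn] at this
      exact this.symm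

theorem finrank_asd (K : Submodule ℝ (Fin 8 → Fin 8 → Fin 8 → Fin 8 → ℝ))
    (hK : ∀ σ, σ ∈ K ↔ σ ∈ FourForm ∧ Asd σ) : Module.finrank ℝ K = 35 := by
  let F : K →ₗ[ℝ] (Fin 35 → ℝ) :=
    { toFun := fun σ n => ev σ.1 (prs n).1
      map_add' := fun _ _ => rfl
      map_smul' := fun _ _ => rfl }
  have inj : Function.Injective F := by
    rw [injective_iff_map_eq_zero]
    rintro ⟨σ, hσ⟩ hF
    obtain ⟨h, H⟩ := (hK σ).1 hσ
    have h0 : ∀ n, ev σ (prs n).1 = 0 := fun n => congrFun hF n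
    ext i j k l
    refine zero_of_sorted h ?_ i j k l
    intro i j k l hij hjk hkl
    obtain ⟨n, hn | hn⟩ := prs_cover i j hij k hjk l hkl
    · have := h0 n
      rwa [hn] at this
    · have := H n
      rwa [hn, h0 n, mul_zero] at this
  have surj : Function.Surjective F := by
    intro f
    let w (t : Fin 8 × Fin 8 × Fin 8 × Fin 8) := wedge4 t.1 t.2.1 t.2.2.1 t.2.2.2
    let τ : Fin 8 → Fin 8 → Fin 8 → Fin 8 → ℝ :=
      ∑ n, f n • (w (prs n).1 - ((prs n).2.2 : ℝ) • w (prs n).2.1)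
    have hτ : τ ∈ FourForm := FourForm.sum_mem fun n _ => FourForm.smul_mem _
      (FourForm.sub_mem (wedge4_mem _ _ _ _) (FourForm.smul_mem _ (wedge4_mem _ _ _ _)))
    have h1 : ∀ m, ev τ (prs m).1 = f m := by
      intro m
      simp only [ev, τ, w, Finset.sum_apply, Pi.smul_apply, Pi.sub_apply, smul_eq_mul, wedge4_eq,
        (prs_orth _ m).1, (prs_orth _ m).2.1]
      simp
    have h2 : ∀ m, ev τ (prs m).2.1 = -((prs m).2.2 : ℝ) * f m := by
      intro m
      simp only [ev, τ, w, Finset.sum_apply, Pi.smul_apply, Pi.sub_apply, smul_eq_mul, wedge4_eq,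
        (prs_orth _ m).2.2.1, (prs_orth _ m).2.2.2]
      simp [mul_comm]
    exact ⟨⟨τ, (hK τ).2 ⟨hτ, fun m => by rw [h1, h2]⟩⟩, funext h1⟩
  rw [(LinearEquiv.ofBijective F ⟨inj, surj⟩).finrank_eq]
  simp

end omega

section kernel
variable {σ : Fin 8 → Fin 8 → Fin 8 → Fin 8 → ℝ}

theorem asd_at (H : Asd σ) (n : Fin 35) {i j k l a b c d : Fin 8} {s : ℤ}
    (hn : prs n = ((i, j, k, l), (a, b, c, d), s)) : σ a b c d = -(s : ℝ) * σ i j k l := by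
  have := H n
  rwa [hn] at this

theorem asd_to_omega (h : σ ∈ FourForm) (H : Asd σ) (i j k l : Fin 8) :
    OmegaOp σ i j k l = 0 := by
  refine zero_of_sorted (Omega_mem h) ?_ i j k l
  have a0 := asd_at H 0 rfl
  have a1 := asd_at H 1 rfl
  have a2 := asd_at H 2 rfl
  have a3 := asd_at H 3 rfl
  have a4 := asd_at H 4 rfl
  have a5 := asd_at H 5 rfl
  have a6 := asd_at H 6 rfl
  have a7 := asd_at H 7 rfl
  have a8 := asd_at H 8 rfl
  have a9 := asd_at H 9 rfl
  have a10 := asd_at H 10 rfl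
  have a11 := asd_at H 11 rfl
  have a12 := asd_at H 12 rfl
  have a13 := asd_at H 13 rfl
  have a14 := asd_at H 14 rfl
  have a15 := asd_at H 15 rfl
  have a16 := asd_at H 16 rfl
  have a17 := asd_at H 17 rfl
  have a18 := asd_at H 18 rfl
  have a19 := asd_at H 19 rfl
  have a20 := asd_at H 20 rfl
  have a21 := asd_at H 21 rfl
  have a22 := asd_at H 22 rfl
  have a23 := asd_at H 23 rfl
  have a24 := asd_at H 24 rfl
  have a25 := asd_at H 25 rfl
  have a26 := asd_at H 26 rfl
  have a27 := asd_at H 27 rfl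
  have a28 := asd_at H 28 rfl
  have a29 := asd_at H 29 rfl
  have a30 := asd_at H 30 rfl
  have a31 := asd_at H 31 rfl
  have a32 := asd_at H 32 rfl
  have a33 := asd_at H 33 rfl
  have a34 := asd_at H 34 rfl
  intro i j k l hij hjk hkl
  rw [Omega_sorted h i j k l hij hjk hkl]
  obtain ⟨n, hn⟩ := prs_cover i j hij k hjk l hkl
  revert hn
  clear hij hjk hkl
  simp only [Int.cast_one, Int.cast_neg, neg_neg, one_mul, neg_mul] at a0 a1 a2 a3 a4 a5 a6 a7 a8 a9 a10 a11 a12 a13 a14 a15 a16 a17 a18 a19 a20 a21 a22 a23 a24 a25 a26 a27 a28 a29 a30 a31 a32 a33 a34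
  fin_cases n <;> (
    simp only [prs]
    rintro (hn | hn) <;> (
    cases hn
    simp only [tv, tab, Matrix.cons_val, s12 h, s23 h, s34 h,
      z12 h, z23 h, z34 h, Fin.reduceLT, Int.cast_one, Int.cast_neg, neg_neg, one_mul, neg_mul, neg_zero, mul_zero]
    simp only [a0, a1, a2, a3, a4, a5, a6, a7, a8, a9, a10, a11,
      a12, a13, a14, a15, a16, a17, a18, a19, a20, a21, a22, a23,
      a24, a25, a26, a27, a28, a29, a30, a31, a32, a33, a34]
    ring))

theorem omega_to_asd (h : σ ∈ FourForm) (H : ∀ i j k l, OmegaOp σ i j k l = 0) : Asd σ := by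
  have O := fun i j k l a b c => (Omega_sorted h i j k l a b c).symm.trans (H i j k l)
  have o0 := O 0 1 2 3 (by decide) (by decide) (by decide)
  have o1 := O 0 1 2 4 (by decide) (by decide) (by decide)
  have o2 := O 0 1 2 5 (by decide) (by decide) (by decide)
  have o3 := O 0 1 2 6 (by decide) (by decide) (by decide)
  have o4 := O 0 1 2 7 (by decide) (by decide) (by decide)
  have o5 := O 0 1 3 4 (by decide) (by decide) (by decide)
  have o6 := O 0 1 3 5 (by decide) (by decide) (by decide)
  have o7 := O 0 1 3 6 (by decide) (by decide) (by decide)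
  have o8 := O 0 1 3 7 (by decide) (by decide) (by decide)
  have o9 := O 0 1 4 5 (by decide) (by decide) (by decide)
  have o10 := O 0 1 4 6 (by decide) (by decide) (by decide)
  have o11 := O 0 1 4 7 (by decide) (by decide) (by decide)
  have o12 := O 0 1 5 6 (by decide) (by decide) (by decide)
  have o13 := O 0 1 5 7 (by decide) (by decide) (by decide)
  have o14 := O 0 1 6 7 (by decide) (by decide) (by decide)
  have o15 := O 0 2 3 4 (by decide) (by decide) (by decide)
  have o16 := O 0 2 3 5 (by decide) (by decide) (by decide)
  have o17 := O 0 2 3 6 (by decide) (by decide) (by decide)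
  have o18 := O 0 2 3 7 (by decide) (by decide) (by decide)
  have o19 := O 0 2 4 5 (by decide) (by decide) (by decide)
  have o20 := O 0 2 4 6 (by decide) (by decide) (by decide)
  have o21 := O 0 2 4 7 (by decide) (by decide) (by decide)
  have o22 := O 0 2 5 6 (by decide) (by decide) (by decide)
  have o23 := O 0 2 5 7 (by decide) (by decide) (by decide)
  have o24 := O 0 2 6 7 (by decide) (by decide) (by decide)
  have o25 := O 0 3 4 5 (by decide) (by decide) (by decide)
  have o26 := O 0 3 4 6 (by decide) (by decide) (by decide)
  have o27 := O 0 3 4 7 (by decide) (by decide) (by decide)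
  have o28 := O 0 3 5 6 (by decide) (by decide) (by decide)
  have o29 := O 0 3 5 7 (by decide) (by decide) (by decide)
  have o30 := O 0 3 6 7 (by decide) (by decide) (by decide)
  have o31 := O 0 4 5 6 (by decide) (by decide) (by decide)
  have o32 := O 0 4 5 7 (by decide) (by decide) (by decide)
  have o33 := O 0 4 6 7 (by decide) (by decide) (by decide)
  have o34 := O 0 5 6 7 (by decide) (by decide) (by decide)
  simp only [tv, tab, Matrix.cons_val, s12 h, s23 h, s34 h,
      z12 h, z23 h, z34 h, Fin.reduceLT, Int.cast_one, Int.cast_neg, neg_neg, one_mul, neg_mul, neg_zero, mul_zero] at o0 o1 o2 o3 o4 o5 o6 o7 o8 o9 o10 o11 o12 o13 o14 o15 o16 o17 o18 o19 o20 o21 o22 o23 o24 o25 o26 o27 o28 o29 o30 o31 o32 o33 o34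
  intro n
  have hn : (n = 0 ∨ n = 13 ∨ n = 24 ∨ n = 28)
      ∨ (n = 1 ∨ n = 14 ∨ n = 23 ∨ n = 31)
      ∨ (n = 2 ∨ n = 8 ∨ n = 21 ∨ n = 25)
      ∨ (n = 3 ∨ n = 11 ∨ n = 18 ∨ n = 26)
      ∨ (n = 4 ∨ n = 6 ∨ n = 10 ∨ n = 17 ∨ n = 19 ∨ n = 27 ∨ n = 34)
      ∨ (n = 5 ∨ n = 12 ∨ n = 29 ∨ n = 33)
      ∨ (n = 7 ∨ n = 9 ∨ n = 16 ∨ n = 20)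
      ∨ (n = 15 ∨ n = 22 ∨ n = 30 ∨ n = 32) := by
    revert n; decide
  rcases hn with hn | hn | hn | hn | hn | hn | hn | hn
  · rcases hn with rfl | rfl | rfl | rfl <;>
    (simp only [prs, ev, Matrix.cons_val, Int.cast_one, Int.cast_neg]
     linarith only [o0, o13, o24, o28])
  · rcases hn with rfl | rfl | rfl | rfl <;>
    (simp only [prs, ev, Matrix.cons_val, Int.cast_one, Int.cast_neg]
     linarith only [o1, o14, o23, o31])
  · rcases hn with rfl | rfl | rfl | rfl <;>
    (simp only [prs, ev, Matrix.cons_val, Int.cast_one, Int.cast_neg]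
     linarith only [o2, o8, o21, o25])
  · rcases hn with rfl | rfl | rfl | rfl <;>
    (simp only [prs, ev, Matrix.cons_val, Int.cast_one, Int.cast_neg]
     linarith only [o3, o11, o18, o26])
  · rcases hn with rfl | rfl | rfl | rfl | rfl | rfl | rfl <;>
    (simp only [prs, ev, Matrix.cons_val, Int.cast_one, Int.cast_neg]
     linarith only [o4, o6, o10, o17, o19, o27, o34])
  · rcases hn with rfl | rfl | rfl | rfl <;>
    (simp only [prs, ev, Matrix.cons_val, Int.cast_one, Int.cast_neg]
     linarith only [o5, o12, o29, o33])
  · rcases hn with rfl | rfl | rfl | rfl <;>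
    (simp only [prs, ev, Matrix.cons_val, Int.cast_one, Int.cast_neg]
     linarith only [o7, o9, o16, o20])
  · rcases hn with rfl | rfl | rfl | rfl <;>
    (simp only [prs, ev, Matrix.cons_val, Int.cast_one, Int.cast_neg]
     linarith only [o15, o22, o30, o32])

end kernel

/-- A 4-form `σ` satisfies `Ω_Φ(σ) = 0` iff `σ` is anti-self-dual; this eigenspace has
dimension 35. -/
theorem spin7_omega_kernel_anti_self_dual :
    (∀ σ, σ ∈ FourForm →
      ((∀ i j k l, OmegaOp σ i j k l = 0) ↔
        ∀ i j k l, σ i j k l =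
          -(1/24) * ∑ a, ∑ b, ∑ c, ∑ d, eps8 ![i, j, k, l, a, b, c, d] * σ a b c d)) ∧
    Module.finrank ℝ ↥(FourForm ⊓ LinearMap.ker OmegaOp) = 35 := by
  have key : ∀ σ, σ ∈ FourForm → ((∀ i j k l, OmegaOp σ i j k l = 0) ↔ Asd σ) := fun σ h =>
    ⟨omega_to_asd h, asd_to_omega h⟩
  refine ⟨fun σ h => (key σ h).trans (star_iff h).symm, ?_⟩
  refine finrank_asd _ fun σ => ?_
  rw [Submodule.mem_inf, LinearMap.mem_ker]
  refine and_congr_right fun h => ?_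
  rw [← key σ h]
  simp only [funext_iff, Pi.zero_apply]
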